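/- For the scalar system ẋ(t) = ax(t) + bu(t) with a < 0 and b ≠ 0, the value function of the maximum hands-off control problem is given explicitly, for every ξ in the reachable set R, by V(ξ) = T + a⁻¹·log(e^{-aT} + a·|b⁻¹ξ|). -/

import Mathlib

open MeasureTheory Set

noncomputable section

/-- The magnitude constraint `‖u‖_∞ ≤ 1` on `[0,T]`. -/
def MagBdd (T : ℝ) (u : ℝ → ℝ) : Prop := ∀ t ∈ Icc (0:ℝ) T, |u t| ≤ 1

/-- The `L⁰` norm of `u`: Lebesgue measure of `{t ∈ [0,T] : u t ≠ 0}`. -/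
def L0Norm (T : ℝ) (u : ℝ → ℝ) : ℝ := (volume {t ∈ Icc (0:ℝ) T | u t ≠ 0}).toReal

/-- `∫₀ᵀ e^{-as} b u(s) ds` for the scalar system. -/
def stateInt1 (T a b : ℝ) (u : ℝ → ℝ) : ℝ :=
  ∫ s in Icc (0:ℝ) T, Real.exp (-(a * s)) * b * u s

/-- The reachable set `R` of the scalar system. -/
def Reach1 (T a b : ℝ) : Set ℝ :=
  {x | ∃ u, Measurable u ∧ MagBdd T u ∧ x = stateInt1 T a b u}

/-- Admissible controls for the scalar system, steering `ξ` to `0` at time `T`. -/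
def Admissible1 (T a b : ℝ) (ξ : ℝ) (u : ℝ → ℝ) : Prop :=
  Measurable u ∧ MagBdd T u ∧ stateInt1 T a b u = -ξ

/-- Value function of the maximum hands-off control problem for the scalar system. -/
def V0s (T a b : ℝ) (ξ : ℝ) : ℝ :=
  sInf {c | ∃ u, Admissible1 T a b ξ u ∧ c = L0Norm T u}

theorem aux_F (T a s : ℝ) (ha : a < 0) (hs : s ≤ T) :
    ∫ x in Icc s T, Real.exp (-(a * x)) = (Real.exp (-(a * T)) - Real.exp (-(a * s))) / (-a) := by
  rw [integral_Icc_eq_integral_Ioc, ← intervalIntegral.integral_of_le hs]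
  have hd : ∀ x ∈ uIcc s T, HasDerivAt (fun x => Real.exp (-(a * x)) / (-a))
      (Real.exp (-(a * x))) x := by
    intro x _
    have h1 : HasDerivAt (fun x : ℝ => -(a * x)) (-(a * 1)) x :=
      ((hasDerivAt_id x).const_mul a).neg
    have h2 := h1.exp.div_const (-a)
    have h3 : Real.exp (-(a * x)) * -(a * 1) / -a = Real.exp (-(a * x)) := by
      have : -a ≠ 0 := by linarith
      rw [div_eq_iff this]; ring
    rw [h3] at h2
    exact h2
  rw [intervalIntegral.integral_eq_sub_of_hasDerivAt hd
    ((by fun_prop : Continuous fun x : ℝ => Real.exp (-(a * x))).intervalIntegrable _ _)]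
  ring

theorem aux_int (T a : ℝ) (s : ℝ) : IntegrableOn (fun x : ℝ => Real.exp (-(a * x))) (Icc s T) :=
  (by fun_prop : Continuous fun x : ℝ => Real.exp (-(a * x))).integrableOn_Icc

theorem aux_lower (T a s : ℝ) (ha : a < 0) (hs0 : 0 ≤ s) (hs : s ≤ T) (u : ℝ → ℝ)
    (hu : Measurable u) (hb : MagBdd T u) :
    |∫ x in Icc 0 T, Real.exp (-(a * x)) * u x| ≤ Real.exp (-(a * s)) * L0Norm T u +
      ((Real.exp (-(a * T)) - Real.exp (-(a * s))) / (-a) - Real.exp (-(a * s)) * (T - s)) := by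
  have hA : MeasurableSet {t : ℝ | u t ≠ 0} := hu (measurableSet_singleton 0).compl
  have hm : L0Norm T u = ∫ x in Icc 0 T, {t : ℝ | u t ≠ 0}.indicator (fun _ => (1:ℝ)) x := by
    rw [setIntegral_indicator hA, setIntegral_const]
    rw [smul_eq_mul, mul_one]; rfl
  have hG : ((Real.exp (-(a * T)) - Real.exp (-(a * s))) / (-a) - Real.exp (-(a * s)) * (T - s))
      = ∫ x in Icc 0 T, (Icc s T).indicator
        (fun x => Real.exp (-(a * x)) - Real.exp (-(a * s))) x := by
    rw [setIntegral_indicator measurableSet_Icc,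
      inter_eq_self_of_subset_right (Icc_subset_Icc_left hs0),
      integral_sub (aux_int T a s) (by simp), aux_F T a s ha hs, setIntegral_const]
    simp [Measure.real, hs, mul_comm]
  have i1 : IntegrableOn ({t : ℝ | u t ≠ 0}.indicator (fun _ => (1:ℝ))) (Icc 0 T) :=
    (integrable_const (1:ℝ)).indicator hA
  have i2 : IntegrableOn ((Icc s T).indicator
        (fun x => Real.exp (-(a * x)) - Real.exp (-(a * s)))) (Icc 0 T) := by
    refine Integrable.indicator ?_ measurableSet_Icc
    exact (aux_int T a 0).sub (by simp)
  rw [hm, hG, ← integral_const_mul, ← integral_add (i1.const_mul _) i2, ← Real.norm_eq_abs]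
  refine norm_integral_le_of_norm_le ((i1.const_mul _).add i2) ?_
  refine (ae_restrict_iff' measurableSet_Icc).2 (Filter.Eventually.of_forall fun x hx => ?_)
  have hux := hb x hx
  have hE := Real.exp_pos (-(a * x))
  have hs' := Real.exp_pos (-(a * s))
  rw [Real.norm_eq_abs, abs_mul, abs_of_pos hE]
  by_cases h0 : u x = 0
  · rw [indicator_of_notMem (by simp [h0] : x ∉ {t : ℝ | u t ≠ 0})]
    by_cases hxs : x ∈ Icc s T
    · rw [indicator_of_mem hxs, h0]
      have : Real.exp (-(a * s)) ≤ Real.exp (-(a * x)) :=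
        Real.exp_le_exp.2 (by nlinarith [hxs.1])
      rw [abs_zero, mul_zero, mul_zero, zero_add]; linarith
    · rw [indicator_of_notMem hxs]; simp [h0]
  · rw [indicator_of_mem (by simpa using h0 : x ∈ {t : ℝ | u t ≠ 0})]
    by_cases hxs : x ∈ Icc s T
    · rw [indicator_of_mem hxs]; nlinarith
    · rw [indicator_of_notMem hxs]
      have hlt : x < s := by
        by_contra h; exact hxs ⟨not_lt.1 h, hx.2⟩
      have : Real.exp (-(a * x)) ≤ Real.exp (-(a * s)) :=
        Real.exp_le_exp.2 (by nlinarith)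
      nlinarith

theorem aux_state (T a b : ℝ) (u : ℝ → ℝ) :
    stateInt1 T a b u = b * ∫ x in Icc 0 T, Real.exp (-(a * x)) * u x := by
  rw [stateInt1, ← integral_const_mul]
  congr 1; ext x; ring

theorem aux_L0le (T : ℝ) (hT : 0 < T) (u : ℝ → ℝ) : L0Norm T u ≤ T := by
  have h : volume {t ∈ Icc (0:ℝ) T | u t ≠ 0} ≤ ENNReal.ofReal T := by
    refine (measure_mono (sep_subset _ _)).trans ?_
    simp
  exact ENNReal.toReal_le_of_le_ofReal hT.le h

theorem scalar_value_function_formula (T a b : ℝ) (hT : 0 < T) (ha : a < 0) (hb : b ≠ 0) :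
    ∀ ξ ∈ Reach1 T a b,
      V0s T a b ξ = T + a⁻¹ * Real.log (Real.exp (-(a * T)) + a * |b⁻¹ * ξ|) := by
  intro ξ hξ
  obtain ⟨w, hw, hwb, hwx⟩ := hξ
  have hc0 : |b⁻¹ * ξ| ≤ (Real.exp (-(a * T)) - 1) / (-a) := by
    have h := aux_lower T a 0 ha le_rfl hT.le w hw hwb
    have h2 := aux_L0le T hT w
    rw [aux_state] at hwx
    rw [hwx, inv_mul_cancel_left₀ hb]
    simp only [mul_zero, neg_zero, Real.exp_zero] at h
    linarith
  set c := |b⁻¹ * ξ| with hc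
  have hcn : 0 ≤ c := abs_nonneg _
  have hge : 1 ≤ Real.exp (-(a * T)) + a * c := by
    rw [le_div_iff₀ (by linarith)] at hc0
    linarith
  obtain ⟨s, hs⟩ : ∃ s, s = -(a⁻¹ * Real.log (Real.exp (-(a * T)) + a * c)) := ⟨_, rfl⟩
  have hane : a ≠ 0 := ha.ne
  have hse : Real.exp (-(a * s)) = Real.exp (-(a * T)) + a * c := by
    have : -(a * s) = Real.log (Real.exp (-(a * T)) + a * c) := by
      rw [hs]; field_simp
    rw [this, Real.exp_log (by linarith)]
  have hs0 : 0 ≤ s := by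
    have : 0 ≤ -(a * s) := by rw [← Real.one_le_exp_iff, hse]; exact hge
    nlinarith
  have hsT : s ≤ T := by
    have : -(a * s) ≤ -(a * T) := by rw [← Real.exp_le_exp, hse]; nlinarith
    nlinarith
  have hcF : (Real.exp (-(a * T)) - Real.exp (-(a * s))) / (-a) = c := by
    rw [hse]; field_simp; ring
  have hgoal : T + a⁻¹ * Real.log (Real.exp (-(a * T)) + a * c) = T - s := by rw [hs]; ring
  rw [hgoal]
  refine IsLeast.csInf_eq ⟨?_, ?_⟩
  · obtain ⟨σ, hσ, hσ0, hσc⟩ : ∃ σ : ℝ, |σ| = 1 ∧ σ ≠ 0 ∧ σ * c = -(b⁻¹ * ξ) := by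
      rcases le_total 0 (b⁻¹ * ξ) with h | h
      · exact ⟨-1, by simp, by simp, by rw [hc, abs_of_nonneg h]; ring⟩
      · exact ⟨1, by simp, by simp, by rw [hc, abs_of_nonpos h]; ring⟩
    refine ⟨(Icc s T).indicator fun _ => σ, ⟨measurable_const.indicator measurableSet_Icc, ?_, ?_⟩, ?_⟩
    · intro t _
      by_cases ht : t ∈ Icc s T
      · rw [indicator_of_mem ht, hσ]
      · rw [indicator_of_notMem ht]; simp
    · rw [aux_state]
      have : (fun x => Real.exp (-(a * x)) * (Icc s T).indicator (fun _ => σ) x)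
          = (Icc s T).indicator (fun x => Real.exp (-(a * x)) * σ) := by
        ext x
        by_cases hx : x ∈ Icc s T
        · rw [indicator_of_mem hx, indicator_of_mem hx]
        · rw [indicator_of_notMem hx, indicator_of_notMem hx, mul_zero]
      rw [this, setIntegral_indicator measurableSet_Icc,
        inter_eq_self_of_subset_right (Icc_subset_Icc_left hs0), integral_mul_const,
        aux_F T a s ha hsT, hcF, mul_comm c, hσc]
      field_simp
    · have : {t ∈ Icc (0:ℝ) T | (Icc s T).indicator (fun _ => σ) t ≠ 0} = Icc s T := by
        ext t
        constructor
        · rintro ⟨_, h⟩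
          by_contra h'
          exact h (indicator_of_notMem h' _)
        · intro h
          refine ⟨⟨hs0.trans h.1, h.2⟩, ?_⟩
          rw [indicator_of_mem h]; exact hσ0
      rw [L0Norm, this, Real.volume_Icc, ENNReal.toReal_ofReal (by linarith)]
  · rintro _ ⟨u, ⟨hu, hub, hux⟩, rfl⟩
    have h := aux_lower T a s ha hs0 hsT u hu hub
    rw [aux_state] at hux
    have hI : (∫ x in Icc 0 T, Real.exp (-(a * x)) * u x) = -(b⁻¹ * ξ) := by
      field_simp; linarith
    rw [hI, abs_neg, ← hc, hcF] at h
    have hp := Real.exp_pos (-(a * s))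
    have : Real.exp (-(a * s)) * (T - s) ≤ Real.exp (-(a * s)) * L0Norm T u := by linarith
    exact le_of_mul_le_mul_left this hp
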